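/- Let χ = (P,Q,R) be a Kolmogorov vector field on 𝕋² with deg P, deg Q, deg R ≤ 3 (i.e., a cubic Kolmogorov vector field on 𝕋²). Then the polynomial identity (x²+y²)·χ(F) = 2F·χ(x²+y²) holds in ℝ[x,y,z]; consequently the rational function H(x,y,z) = ((x²+y²−a²)²+z²−1)·(x²+y²)^{−2} satisfies P·∂H/∂x + Q·∂H/∂y + R·∂H/∂z = 0 at every point of ℝ³ with x²+y² ≠ 0, i.e., H is a rational first integral of χ. -/

import Mathlib

open MvPolynomial

/-- Derivative of `g` along the polynomial vector field `(P, Q, R)` in `ℝ[x,y,z]`. -/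
noncomputable def vf (P Q R g : MvPolynomial (Fin 3) ℝ) : MvPolynomial (Fin 3) ℝ :=
  P * pderiv 0 g + Q * pderiv 1 g + R * pderiv 2 g

/-- The defining polynomial `F = (x²+y²-a²)² + z² - 1` of the torus `𝕋²`. -/
noncomputable def torusF (a : ℝ) : MvPolynomial (Fin 3) ℝ :=
  (X 0 ^ 2 + X 1 ^ 2 - C (a ^ 2)) ^ 2 + X 2 ^ 2 - 1

/-- `(P, Q, R)` is a polynomial vector field on the torus `𝕋²`. -/
def IsVFOnTorus (a : ℝ) (P Q R : MvPolynomial (Fin 3) ℝ) : Prop :=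
  ∃ K : MvPolynomial (Fin 3) ℝ, vf P Q R (torusF a) = K * torusF a


/-- The rational function `H = ((x²+y²-a²)² + z² - 1) / (x²+y²)²` on `ℝ³`. -/
noncomputable def Hfun (a : ℝ) : (Fin 3 → ℝ) → ℝ := fun v =>
  ((v 0 ^ 2 + v 1 ^ 2 - a ^ 2) ^ 2 + v 2 ^ 2 - 1) / (v 0 ^ 2 + v 1 ^ 2) ^ 2

/-- total degree bound for a product -/
lemma aux_mul_deg {f g : MvPolynomial (Fin 3) ℝ} {m n : ℕ} (hf : f.totalDegree ≤ m)
    (hg : g.totalDegree ≤ n) : (f * g).totalDegree ≤ m + n :=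
  (totalDegree_mul f g).trans (add_le_add hf hg)

lemma aux_add_deg {f g : MvPolynomial (Fin 3) ℝ} {n : ℕ} (hf : f.totalDegree ≤ n)
    (hg : g.totalDegree ≤ n) : (f + g).totalDegree ≤ n :=
  (totalDegree_add f g).trans (max_le hf hg)

lemma aux_sub_deg {f g : MvPolynomial (Fin 3) ℝ} {n : ℕ} (hf : f.totalDegree ≤ n)
    (hg : g.totalDegree ≤ n) : (f - g).totalDegree ≤ n :=
  (totalDegree_sub f g).trans (max_le hf hg)

lemma aux_cancel_deg {f g : MvPolynomial (Fin 3) ℝ} {m n : ℕ} (hf0 : f ≠ 0)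
    (hf : m ≤ f.totalDegree) (h : (f * g).totalDegree ≤ m + n) : g.totalDegree ≤ n := by
  by_cases hg : g = 0
  · simp [hg]
  rw [totalDegree_mul_of_isDomain hf0 hg] at h
  omega

lemma aux_coeff_w (c : ℝ) (M : MvPolynomial (Fin 3) ℝ) (m : Fin 3 →₀ ℕ) :
    coeff m ((X 0 ^ 2 + X 1 ^ 2 - C c) * M) =
      (if 2 ≤ m 0 then coeff (m - Finsupp.single 0 2) M else 0) +
      (if 2 ≤ m 1 then coeff (m - Finsupp.single 1 2) M else 0) - c * coeff m M := by
  rw [sub_mul, add_mul, coeff_sub, coeff_add, coeff_C_mul, X_pow_eq_monomial, X_pow_eq_monomial,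
    coeff_monomial_mul', coeff_monomial_mul']
  simp [Finsupp.single_le_iff]

lemma aux_coeff_X2 (i : Fin 3) (M : MvPolynomial (Fin 3) ℝ) (m : Fin 3 →₀ ℕ) (h : m i < 2) :
    coeff m (X i ^ 2 * M) = 0 := by
  rw [X_pow_eq_monomial, coeff_monomial_mul', if_neg]
  simpa [Finsupp.single_le_iff] using h

lemma aux_wdeg (c : ℝ) : 2 ≤ (X 0 ^ 2 + X 1 ^ 2 - C c : MvPolynomial (Fin 3) ℝ).totalDegree := by
  have h : coeff (Finsupp.single 0 2) ((X 0 ^ 2 + X 1 ^ 2 - C c : MvPolynomial (Fin 3) ℝ) * 1) ≠ 0 := by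
    rw [aux_coeff_w]
    simp [coeff_one, Finsupp.single_eq_zero, eq_comm]
  rw [mul_one] at h
  have := le_totalDegree (mem_support_iff.mpr h)
  simpa using this

lemma aux_Fdeg (a : ℝ) : 4 ≤ (torusF a).totalDegree := by
  have h : coeff (Finsupp.single 0 4) (torusF a) ≠ 0 := by
    have e : torusF a = (X 0 ^ 2 + X 1 ^ 2 - C (a^2)) * ((X 0 ^ 2 + X 1 ^ 2 - C (a^2)) * 1)
      + X 2 ^ 2 * 1 - 1 := by unfold torusF; ring
    rw [e, coeff_sub, coeff_add, aux_coeff_X2 2 _ _ (by simp), aux_coeff_w, aux_coeff_w, aux_coeff_w,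
      aux_coeff_w]
    simp [-mul_one, -map_pow, coeff_one, ← Finsupp.single_tsub, eq_comm]
  have := le_totalDegree (mem_support_iff.mpr h)
  simpa using this

lemma aux_vfF (a : ℝ) (P Q R : MvPolynomial (Fin 3) ℝ) :
    vf P Q R (torusF a) = 4 * (X 0 ^ 2 + X 1 ^ 2 - C (a^2)) * (X 0 * P + X 1 * Q)
      + 2 * X 2 * R := by
  simp only [vf, torusF, map_add, map_sub, Derivation.leibniz_pow, pderiv_X, pderiv_C, Pi.single_apply]
  simp
  ring

lemma aux_vfS (P Q R : MvPolynomial (Fin 3) ℝ) :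
    vf P Q R (X 0 ^ 2 + X 1 ^ 2) = 2 * (X 0 * P + X 1 * Q) := by
  simp only [vf, map_add, Derivation.leibniz_pow, pderiv_X, Pi.single_apply]
  simp
  ring

lemma aux_zero (a : ℝ) (ha : 1 < a) (D M K N A B : MvPolynomial (Fin 3) ℝ)
    (hM : M.totalDegree ≤ 2) (hK : K.totalDegree ≤ 2)
    (h1 : (X 0 ^ 2 + X 1 ^ 2 - C (a^2)) * M = X 2 ^ 2 * N - K)
    (h2 : D = M - C (a^2) * K) (h3 : D = X 0 ^ 2 * A + X 1 ^ 2 * B) : D = 0 := by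
  have key : ∀ m : Fin 3 →₀ ℕ, m 2 = 0 → (if 2 ≤ m 0 then coeff (m - Finsupp.single 0 2) M else 0) +
      (if 2 ≤ m 1 then coeff (m - Finsupp.single 1 2) M else 0) - a^2 * coeff m M = - coeff m K := by
    intro m hm
    rw [← aux_coeff_w, h1, coeff_sub, aux_coeff_X2 2 _ _ (by omega)]
    ring
  have d : ∀ m : Fin 3 →₀ ℕ, coeff m D = coeff m M - a^2 * coeff m K := by
    intro m; rw [h2, coeff_sub, coeff_C_mul]
  have low : ∀ m : Fin 3 →₀ ℕ, m 0 < 2 → m 1 < 2 → coeff m D = 0 := by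
    intro m h0 h1
    rw [h3, coeff_add, aux_coeff_X2 0 _ _ h0, aux_coeff_X2 1 _ _ h1, add_zero]
  have hbig : ∀ f : MvPolynomial (Fin 3) ℝ, f.totalDegree ≤ 2 → ∀ m : Fin 3 →₀ ℕ,
      2 < m 0 + m 1 + m 2 → coeff m f = 0 := by
    intro f hf m hm
    by_contra hne
    have := le_totalDegree (mem_support_iff.mpr hne)
    rw [Finsupp.sum_fintype _ _ (by simp), Fin.sum_univ_three] at this
    omega
  have a4 : 1 < a^4 := one_lt_pow₀ ha (by norm_num)
  have z1 := key 0 rfl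
  have z2 := low 0 (by simp) (by simp)
  rw [d] at z2
  simp only [Finsupp.coe_zero, Pi.zero_apply, nonpos_iff_eq_zero, OfNat.ofNat_ne_zero, if_false] at z1
  have M0 : coeff 0 M = 0 := by
    have : (a^4 - 1) * coeff 0 M = 0 := by linear_combination -z2 - a^2 * z1
    rcases mul_eq_zero.mp this with h | h
    · linarith
    · exact h
  have x4 := key (Finsupp.single 0 4) (by simp)
  have y4 := key (Finsupp.single 1 4) (by simp)
  have x2 := key (Finsupp.single 0 2) (by simp)
  have y2 := key (Finsupp.single 1 2) (by simp)
  rw [hbig M hM (Finsupp.single 0 4) (by simp), hbig K hK (Finsupp.single 0 4) (by simp)] at x4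
  rw [hbig M hM (Finsupp.single 1 4) (by simp), hbig K hK (Finsupp.single 1 4) (by simp)] at y4
  simp [← Finsupp.single_tsub] at x4 y4 x2 y2
  rw [x4, M0] at x2
  rw [y4, M0] at y2
  simp at x2 y2
  ext m
  rw [coeff_zero]
  by_cases hb : 2 < m 0 + m 1 + m 2
  · rw [d, hbig M hM _ hb, hbig K hK _ hb]; simp
  by_cases hl : m 0 < 2 ∧ m 1 < 2
  · exact low m hl.1 hl.2
  have : m = Finsupp.single 0 2 ∨ m = Finsupp.single 1 2 := by
    by_cases h : m 0 < 2
    · right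
      ext i; fin_cases i <;> simp <;> omega
    · left
      ext i; fin_cases i <;> simp <;> omega
  rcases this with rfl | rfl
  · rw [d, x4, x2]; simp
  · rw [d, y4, y2]; simp

lemma aux_fderiv (a : ℝ) (v : Fin 3 → ℝ) (h : (v 0) ^ 2 + (v 1) ^ 2 ≠ 0) (e : Fin 3 → ℝ) :
    fderiv ℝ (Hfun a) v e =
      ((4 * (v 0 ^ 2 + v 1 ^ 2 - a^2) * (v 0 * e 0 + v 1 * e 1) + 2 * v 2 * e 2) * (v 0 ^ 2 + v 1 ^ 2)
        - 4 * ((v 0 ^ 2 + v 1 ^ 2 - a ^ 2) ^ 2 + v 2 ^ 2 - 1) * (v 0 * e 0 + v 1 * e 1))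
        / (v 0 ^ 2 + v 1 ^ 2) ^ 3 := by
  have p : ∀ i : Fin 3, HasFDerivAt (fun v : Fin 3 → ℝ => v i)
    (ContinuousLinearMap.proj (R := ℝ) (φ := fun _ : Fin 3 => ℝ) i) v := fun i => hasFDerivAt_apply i v
  have S := ((p 0).pow 2).add ((p 1).pow 2)
  have num := ((((S.sub_const (a^2)).pow 2).add ((p 2).pow 2)).sub_const 1)
  have H := num.mul ((hasDerivAt_inv (pow_ne_zero 2 h)).comp_hasFDerivAt v (S.pow 2))
  have H' : HasFDerivAt (Hfun a) _ v := H.congr_of_eventuallyEq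
    (Filter.Eventually.of_forall fun u => by simp [Hfun, div_eq_mul_inv])
  rw [H'.fderiv]
  simp
  field_simp
  ring

theorem stmt_12 (a : ℝ) (ha : 1 < a) (P Q R : MvPolynomial (Fin 3) ℝ)
    (hP : P.totalDegree ≤ 3) (hQ : Q.totalDegree ≤ 3) (hR : R.totalDegree ≤ 3)
    (hx : X 0 ∣ P) (hy : X 1 ∣ Q) (hz : X 2 ∣ R)
    (hvf : IsVFOnTorus a P Q R) :
    (X 0 ^ 2 + X 1 ^ 2) * vf P Q R (torusF a) =
        2 * torusF a * vf P Q R (X 0 ^ 2 + X 1 ^ 2) ∧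
    ∀ v : Fin 3 → ℝ, (v 0) ^ 2 + (v 1) ^ 2 ≠ 0 →
      eval v P * fderiv ℝ (Hfun a) v (Pi.single 0 1) +
      eval v Q * fderiv ℝ (Hfun a) v (Pi.single 1 1) +
      eval v R * fderiv ℝ (Hfun a) v (Pi.single 2 1) = 0 := by
  obtain ⟨K, hK⟩ := hvf
  have part1 : (X 0 ^ 2 + X 1 ^ 2) * vf P Q R (torusF a) =
        2 * torusF a * vf P Q R (X 0 ^ 2 + X 1 ^ 2) := by
    obtain ⟨p, rfl⟩ := hx
    obtain ⟨q, rfl⟩ := hy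
    obtain ⟨r, rfl⟩ := hz
    have X1 : ∀ i : Fin 3, (X i : MvPolynomial (Fin 3) ℝ).totalDegree ≤ 1 := fun i => by simp
    have hr : r.totalDegree ≤ 2 := aux_cancel_deg (X_ne_zero _) (by simp) hR
    have num : ∀ n : ℕ, ∀ c : ℝ, (C c : MvPolynomial (Fin 3) ℝ).totalDegree ≤ n := by simp
    have sq : ∀ i : Fin 3, (X i ^ 2 : MvPolynomial (Fin 3) ℝ).totalDegree ≤ 2 := fun i => by simp
    have wdeg : (X 0 ^ 2 + X 1 ^ 2 - C (a^2) : MvPolynomial (Fin 3) ℝ).totalDegree ≤ 2 :=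
      aux_sub_deg (aux_add_deg (sq 0) (sq 1)) (num _ _)
    have w0 : (X 0 ^ 2 + X 1 ^ 2 - C (a^2) : MvPolynomial (Fin 3) ℝ) ≠ 0 := by
      intro h
      have := aux_wdeg (a^2)
      rw [h, totalDegree_zero] at this
      omega
    have F0 : torusF a ≠ 0 := by
      intro h
      have := aux_Fdeg a
      rw [h, totalDegree_zero] at this
      omega
    have C4 : (4 : MvPolynomial (Fin 3) ℝ) = C 4 := (map_ofNat C 4).symm
    have C2 : (2 : MvPolynomial (Fin 3) ℝ) = C 2 := (map_ofNat C 2).symm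
    have Kdeg : K.totalDegree ≤ 2 := by
      apply aux_cancel_deg F0 (aux_Fdeg a)
      rw [mul_comm, ← hK, aux_vfF, C4, C2]
      apply aux_add_deg
      · exact aux_mul_deg (m := 2) (n := 4)
          (aux_mul_deg (m := 0) (n := 2) (num _ _) wdeg)
          (aux_add_deg (aux_mul_deg (m := 1) (n := 3) (X1 _) hP)
            (aux_mul_deg (m := 1) (n := 3) (X1 _) hQ))
      · exact (aux_mul_deg (m := 1) (n := 3) (aux_mul_deg (m := 0) (n := 1) (num _ _) (X1 _)) hR).trans
          (by norm_num)
    rw [aux_vfF] at hK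
    have h1 : (X 0 ^ 2 + X 1 ^ 2 - C (a^2)) * (4 * (X 0 ^ 2 * p + X 1 ^ 2 * q)
        - K * (X 0 ^ 2 + X 1 ^ 2 - C (a^2))) = X 2 ^ 2 * (K - C 2 * r) - K := by
      rw [← C2]
      unfold torusF at hK
      linear_combination hK
    have Mdeg := aux_cancel_deg (n := 2) w0 (aux_wdeg (a^2)) (by
      rw [h1]
      exact aux_sub_deg (aux_mul_deg (sq _)
        (aux_sub_deg Kdeg (aux_mul_deg (m := 0) (n := 2) (num _ _) hr))) (Kdeg.trans (by norm_num)))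
    have hD := aux_zero a ha (4 * (X 0 ^ 2 * p + X 1 ^ 2 * q) - K * (X 0 ^ 2 + X 1 ^ 2)) _ K _
      (4 * p - K) (4 * q - K) Mdeg Kdeg h1 (by ring) (by ring)
    rw [aux_vfF, aux_vfS, hK]
    linear_combination (-torusF a) * hD
  refine ⟨part1, fun v hv => ?_⟩
  have E := congrArg (eval v) part1
  rw [aux_vfF, aux_vfS] at E
  simp [torusF] at E
  simp only [aux_fderiv a v hv]
  simp
  field_simp
  linear_combination E
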